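/- arXiv:2406.04715 — 7 statements merged into one kernel-verified Lean document; each statement's English description precedes it below -/
import Mathlib

section
/- Let 𝒫 be the quotient of ℂ² ∖ {(0,0)} by the identification v ∼ −v. For (α,β) ∈ ℂ² ∖ {(0,0)} define A_{(α,β)} := [[1+αβ, α²],[−β², 1−αβ]]. Then the map F₂ : 𝒫 → X̃₂ defined by F₂([(α,β)]) = A_{(α,β)} is a well-defined bijection onto X̃₂ = {A ∈ SL(2,ℂ) : tr A = 2, A ≠ I, A ≠ −I}. -/
/-!
A matrix of trace `2` has the form `[[1 + x, b], [c, 1 - x]]`, and its determinant is `1` exactly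
when `x² = b * (-c)`. Over `ℂ` one can choose `α² = b` and `β² = -c`; then `(α β)² = x²`, so after
possibly changing the sign of `β` also `α β = x`, which gives surjectivity. Conversely the three
monomials `α²`, `β²`, `α β` determine `(α, β)` up to a common sign, which gives injectivity.
-/

open Matrix

/-- `X̃_t`: the set of matrices in `SL(2,ℂ)` of trace `t`, other than `±I`. -/
def XtM (t : ℂ) : Set (Matrix (Fin 2) (Fin 2) ℂ) :=
  {A | A.det = 1 ∧ A.trace = t ∧ A ≠ 1 ∧ A ≠ -1}

/-- The matrix `A_{(α,β)} = [[1+αβ, α²],[−β², 1−αβ]]`. -/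
def Apar (v : ℂ × ℂ) : Matrix (Fin 2) (Fin 2) ℂ :=
  !![1 + v.1 * v.2, v.1 ^ 2; -v.2 ^ 2, 1 - v.1 * v.2]

/-- The setoid on `ℂ² ∖ {(0,0)}` identifying `v` with `−v`; the quotient is `𝒫`. -/
def negSetoidP : Setoid {v : ℂ × ℂ // v ≠ 0} where
  r v w := v.1 = w.1 ∨ v.1 = -w.1
  iseqv := by
    constructor
    · intro v; exact Or.inl rfl
    · rintro v w (h | h)
      · exact Or.inl h.symm
      · exact Or.inr (by rw [h, neg_neg])
    · rintro u v w (h | h) (h' | h')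
      · exact Or.inl (h.trans h')
      · exact Or.inr (by rw [h, h'])
      · exact Or.inr (by rw [h, h'])
      · exact Or.inl (by rw [h, h', neg_neg])

theorem Apar_mem (v : ℂ × ℂ) (hv : v ≠ 0) : Apar v ∈ XtM 2 := by
  -- The off-diagonal entries of `±I` vanish, which would force `α = β = 0`.
  have key : ∀ B : Matrix (Fin 2) (Fin 2) ℂ, B 0 1 = 0 → B 1 0 = 0 → Apar v ≠ B := by
    rintro B h₁ h₂ rfl
    apply hv
    ext
    · simpa [Apar] using h₁
    · simpa [Apar] using h₂
  refine ⟨?_, ?_, key _ (by simp) (by simp), key _ (by simp) (by simp)⟩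
  · simp only [Apar, Matrix.det_fin_two_of]
    ring
  · simp only [Apar, Matrix.trace_fin_two_of]
    ring

theorem Apar_eq_iff (v w : ℂ × ℂ) : Apar v = Apar w ↔ v = w ∨ v = -w := by
  obtain ⟨a, b⟩ := v
  obtain ⟨c, d⟩ := w
  constructor
  · intro h
    have hab : a * b = c * d := by simpa [Apar] using congrFun (congrFun h 0) 0
    have ha : a ^ 2 = c ^ 2 := by simpa [Apar] using congrFun (congrFun h 0) 1
    have hb : b ^ 2 = d ^ 2 := by simpa [Apar] using congrFun (congrFun h 1) 0
    simp only [Prod.mk.injEq, Prod.neg_mk]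
    -- With opposite relative signs, `α β = -α β`, so one coordinate is zero and its sign is free.
    rcases sq_eq_sq_iff_eq_or_eq_neg.mp ha with rfl | rfl <;>
      rcases sq_eq_sq_iff_eq_or_eq_neg.mp hb with rfl | rfl <;> grind
  · rintro (h | h)
    · rw [h]
    · rw [h]
      simp [Apar]

theorem exists_Apar_eq (A : Matrix (Fin 2) (Fin 2) ℂ) (hA : A ∈ XtM 2) :
    ∃ v : ℂ × ℂ, v ≠ 0 ∧ Apar v = A := by
  obtain ⟨hdet, htr, hne, -⟩ := hA
  rw [Matrix.det_fin_two] at hdet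
  rw [Matrix.trace_fin_two] at htr
  obtain ⟨α, hα⟩ := IsAlgClosed.exists_pow_nat_eq (A 0 1) (n := 2) (by norm_num)
  obtain ⟨β, hβ⟩ := IsAlgClosed.exists_pow_nat_eq (-A 1 0) (n := 2) (by norm_num)
  have hsq : (α * β) ^ 2 = (A 0 0 - 1) ^ 2 := by
    rw [mul_pow, hα, hβ]
    linear_combination hdet - A 0 0 * htr
  -- Replacing `β` by `-β` fixes the sign of the product.
  obtain ⟨γ, hγ, hαγ⟩ : ∃ γ : ℂ, γ ^ 2 = -A 1 0 ∧ α * γ = A 0 0 - 1 := by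
    rcases sq_eq_sq_iff_eq_or_eq_neg.mp hsq with h | h
    · exact ⟨β, hβ, h⟩
    · exact ⟨-β, by rw [neg_sq, hβ], by rw [mul_neg, h, neg_neg]⟩
  have hAv : Apar (α, γ) = A := by
    ext i j
    fin_cases i <;> fin_cases j <;> simp [Apar, hα, hγ, hαγ]
    linear_combination -htr
  refine ⟨(α, γ), fun h => hne ?_, hAv⟩
  rw [← hAv, h]
  simp [Apar, Matrix.one_fin_two]

/-- the map `F₂ : 𝒫 → X̃₂`, `F₂([(α,β)]) = A_{(α,β)}`, is a well-defined
bijection onto `X̃₂`. -/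
theorem bijection_P_to_X2 :
    ∃ F₂ : Quotient negSetoidP → ↥(XtM 2),
      (∀ v : {v : ℂ × ℂ // v ≠ 0},
        ((F₂ (Quotient.mk negSetoidP v) : Matrix (Fin 2) (Fin 2) ℂ)) = Apar v.1) ∧
      Function.Bijective F₂ := by
  refine ⟨Quotient.lift (fun v => ⟨Apar v.1, Apar_mem v.1 v.2⟩) fun v w h =>
    Subtype.ext ((Apar_eq_iff v.1 w.1).mpr h), fun v => rfl, ?_, ?_⟩
  · rintro ⟨v⟩ ⟨w⟩ h
    exact Quotient.sound ((Apar_eq_iff v.1 w.1).mp (congrArg Subtype.val h))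
  · rintro ⟨A, hA⟩
    obtain ⟨v, hv, h⟩ := exists_Apar_eq A hA
    exact ⟨Quotient.mk _ ⟨v, hv⟩, Subtype.ext h⟩
end

section
/- Let t ∈ ℂ ∖ {2,−2} and let λ ∈ ℂ* satisfy λ + λ⁻¹ = t. Let ℳ := {(α,β,γ) ∈ ℂ³ : α(1−α) + βγ = 0}. For (α,β,γ) ∈ ℳ define A^λ_{(α,β,γ)} := [[αλ + (1−α)λ⁻¹, (λ−λ⁻¹)β],[−(λ−λ⁻¹)γ, (1−α)λ + αλ⁻¹]]. Then the map F_t : ℳ → X̃_t defined by F_t(α,β,γ) = A^λ_{(α,β,γ)} is a bijection onto X̃_t = {A ∈ SL(2,ℂ) : tr A = t, A ≠ I, A ≠ −I}. -/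
/-!
Write `μ = λ⁻¹` and `d = λ - μ`. Since `d² = t² - 4`, the hypothesis `t ≠ ±2` gives `d ≠ 0`.
The determinant of `A^λ_{(α,β,γ)}` is `1 + d² (α(1-α) + βγ)` and its trace is `λ + μ = t`,
so the affine map `(α,β,γ) ↦ A^λ_{(α,β,γ)}`, a bijection from `ℂ³` onto the matrices of trace `t`
because `d ≠ 0`, identifies `ℳ` with the determinant-one locus. The conditions `A ≠ ±I` are
automatic, as `±I` has trace `±2`.
-/

open Matrix

/-- The matrix `A^λ_{(α,β,γ)}`. -/
noncomputable def Aloxo (lam : ℂ) (m : ℂ × ℂ × ℂ) : Matrix (Fin 2) (Fin 2) ℂ :=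
  !![m.1 * lam + (1 - m.1) * lam⁻¹, (lam - lam⁻¹) * m.2.1;
     -((lam - lam⁻¹) * m.2.2), (1 - m.1) * lam + m.1 * lam⁻¹]

/-- for `t ∉ {2,−2}` and `λ ∈ ℂ*` with `λ + λ⁻¹ = t`, the map
`F_t : ℳ → X̃_t`, `(α,β,γ) ↦ A^λ_{(α,β,γ)}`, is a bijection from
`ℳ = {(α,β,γ) : α(1−α) + βγ = 0}` onto `X̃_t`. -/
theorem bijection_M_to_Xt (t lam : ℂ) (h2 : t ≠ 2) (h2' : t ≠ -2) (hlam : lam ≠ 0)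
    (hlt : lam + lam⁻¹ = t) :
    Set.BijOn (Aloxo lam)
      {m : ℂ × ℂ × ℂ | m.1 * (1 - m.1) + m.2.1 * m.2.2 = 0} (XtM t) := by
  have hd : lam - lam⁻¹ ≠ 0 := by
    intro h
    have hmul : lam * lam⁻¹ = 1 := mul_inv_cancel₀ hlam
    have : (t - 2) * (t + 2) = 0 := by
      rw [← hlt]
      linear_combination (lam - lam⁻¹) * h + 4 * hmul
    rcases mul_eq_zero.mp this with h' | h'
    · exact h2 (sub_eq_zero.mp h')
    · exact h2' (eq_neg_of_add_eq_zero_left h')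
  have hmul : lam * lam⁻¹ = 1 := mul_inv_cancel₀ hlam
  unfold Aloxo
  -- Only the relations `λ μ = 1`, `λ + μ = t` and `λ - μ ≠ 0` matter from here on.
  generalize lam⁻¹ = mu at *
  refine ⟨?_, ?_, ?_⟩
  · rintro ⟨a, b, c⟩ hm
    simp only [Set.mem_ofPred_eq] at hm
    have htr : (!![a * lam + (1 - a) * mu, (lam - mu) * b;
        -((lam - mu) * c), (1 - a) * lam + a * mu]).trace = t := by
      rw [Matrix.trace_fin_two_of, ← hlt]
      ring
    refine ⟨?_, htr, ?_, ?_⟩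
    · rw [Matrix.det_fin_two_of]
      linear_combination (lam - mu) ^ 2 * hm + hmul
    · intro h
      dsimp only at h
      rw [h] at htr
      exact h2 (by simpa using htr.symm)
    · intro h
      dsimp only at h
      rw [h] at htr
      exact h2' (by simpa using htr.symm)
  · rintro ⟨a, b, c⟩ - ⟨a', b', c'⟩ - h
    have h00 := congrFun (congrFun h 0) 0
    have h01 := congrFun (congrFun h 0) 1
    have h10 := congrFun (congrFun h 1) 0
    simp only [Matrix.of_apply, Matrix.cons_val', Matrix.cons_val_zero, Matrix.cons_val_one,
      Matrix.cons_val_fin_one] at h00 h01 h10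
    have ha : a = a' := mul_left_cancel₀ hd (by linear_combination h00)
    have hb : b = b' := mul_left_cancel₀ hd h01
    have hc : c = c' := mul_left_cancel₀ hd (neg_injective h10)
    rw [ha, hb, hc]
  · rintro A ⟨hdet, htr, -, -⟩
    rw [Matrix.det_fin_two] at hdet
    rw [Matrix.trace_fin_two] at htr
    refine ⟨((A 0 0 - mu) / (lam - mu), A 0 1 / (lam - mu), -A 1 0 / (lam - mu)), ?_, ?_⟩
    · simp only [Set.mem_ofPred_eq]
      field_simp
      linear_combination hdet - hmul + A 0 0 * (hlt - htr)
    · ext i j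
      fin_cases i <;> fin_cases j <;> simp <;> field_simp
      · ring
      · linear_combination (lam - mu) * (hlt - htr)
end

section
/- Let t ∈ ℂ. Give SL(2,ℂ) the subspace topology from the 2×2 complex matrices, give X̃_t the subspace topology, and give the set H̃_t\SL(2,ℂ) of right cosets (the quotient of SL(2,ℂ) by the relation x ∼ y ⇔ xy⁻¹ ∈ H̃_t) the quotient topology. Then the map F : H̃_t\SL(2,ℂ) → X̃_t defined by F(H̃_t g) = g⁻¹ A_t g is a well-defined homeomorphism. -/
/-!
The group `SL(2,ℂ)` acts on `X̃_t` by conjugation, `H̃_t` is the stabilizer of `A_t`, and the orbit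
map `g ↦ g⁻¹ A_t g` induces a continuous injection of the coset space into `X̃_t`. Surjectivity
and continuity of the inverse both follow from the existence of continuous local sections.

A section near `x ∈ X̃_t` comes from an intertwiner: a continuous matrix-valued function `M` with
`M(y) y = A_t M(y)` on `X̃_t` and `det M(x) ≠ 0`. Near `x` one divides `M` by a continuous branch of
`√(det M)` to land in `SL(2,ℂ)`. This is `exists_homeomorph_of_intertwiner`.

The intertwiners are explicit. In the parabolic case `N = y - ε` squares to zero and `M(y)` has rows
`v`, `v N` for a standard basis vector `v`. In the diagonalizable case the rows of `M(y)` are a row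
of `y - λ⁻¹` and a row of `y - λ`, which are left eigenvectors of `y` for `λ` and `λ⁻¹`. The
choice of basis vectors depends on which entries of `x` are nonzero.
-/

open Matrix

abbrev SL2C := Matrix.SpecialLinearGroup (Fin 2) ℂ

/-- The subspace topology on `SL(2,ℂ)` from the `2×2` complex matrices. -/
noncomputable instance : TopologicalSpace SL2C :=
  TopologicalSpace.induced (fun A => (A : Matrix (Fin 2) (Fin 2) ℂ)) inferInstance

/-- `X̃_t`: the set of elements of `SL(2,ℂ)` of trace `t`, other than `±I`. -/
def XtSL (t : ℂ) : Set SL2C :=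
  {A | Matrix.trace (A : Matrix (Fin 2) (Fin 2) ℂ) = t ∧
    (A : Matrix (Fin 2) (Fin 2) ℂ) ≠ 1 ∧ (A : Matrix (Fin 2) (Fin 2) ℂ) ≠ -1}

/-- `H̃_{±2}`: the elements `ε'·[[1,μ],[0,1]]` of `SL(2,ℂ)`, `ε' ∈ {1,−1}`, `μ ∈ ℂ`. -/
def HparSL : Set SL2C :=
  {B | ∃ ε μ : ℂ, (ε = 1 ∨ ε = -1) ∧ (B : Matrix (Fin 2) (Fin 2) ℂ) = !![ε, μ; 0, ε]}

/-- `H̃_t` (`t ≠ ±2`): the diagonal matrices `[[μ,0],[0,μ⁻¹]]`, `μ ∈ ℂ*`. -/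
def HdiagSL : Set SL2C :=
  {B | ∃ μ : ℂ, μ ≠ 0 ∧ (B : Matrix (Fin 2) (Fin 2) ℂ) = !![μ, 0; 0, μ⁻¹]}

open Topology Filter

/-! ### Orbit maps with local sections -/

lemma SL2C.isInducing_coe :
    IsInducing (fun A : SL2C => (A : Matrix (Fin 2) (Fin 2) ℂ)) := ⟨rfl⟩

/-- A continuous matrix-valued function that is invertible at `x` can be rescaled, near `x`, to a
map into `SL(2,ℂ)` that is continuous at `x`. -/
lemma exists_normalization (M : Matrix (Fin 2) (Fin 2) ℂ → Matrix (Fin 2) (Fin 2) ℂ)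
    (hM : Continuous M) (x : SL2C) (hx : (M x).det ≠ 0) :
    ∃ s : SL2C → SL2C, ContinuousAt s x ∧
      ∀ y : SL2C, (M y).det ≠ 0 →
        ∃ c : ℂ, ((s y : SL2C) : Matrix (Fin 2) (Fin 2) ℂ) = c • M y := by
  classical
  obtain ⟨r₀, hr₀⟩ : ∃ r₀ : ℂ, r₀ ^ 2 = (M x).det :=
    IsAlgClosed.exists_pow_nat_eq _ (by norm_num)
  -- The quotient of determinants is `1` at `x`, away from the cut of the principal branch.
  let r : SL2C → ℂ := fun y => r₀ * ((M y).det / (M x).det) ^ ((2 : ℕ) : ℂ)⁻¹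
  have hr : ∀ y, r y ^ 2 = (M y).det := by
    intro y
    simp only [r]
    rw [mul_pow, Complex.cpow_nat_inv_pow _ two_ne_zero, hr₀]
    field_simp
  have hdet : ∀ y : SL2C, (M y).det ≠ 0 → ((r y)⁻¹ • M y).det = 1 := by
    intro y hy
    rw [Matrix.det_smul, Fintype.card_fin, inv_pow, hr, inv_mul_cancel₀ hy]
  have hcM : Continuous (fun y : SL2C => M y) := hM.comp SL2C.isInducing_coe.continuous
  have hcd : Continuous (fun y : SL2C => (M y).det) := hcM.matrix_det
  have hrc : ContinuousAt r x := by
    refine continuousAt_const.mul (ContinuousAt.cpow (hcd.div_const _).continuousAt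
      continuousAt_const ?_)
    rw [div_self hx]
    exact Complex.one_mem_slitPlane
  have hrx : r x ≠ 0 := by
    intro h
    apply hx
    rw [← hr, h]
    norm_num
  refine ⟨fun y => if h : (M y).det ≠ 0 then ⟨(r y)⁻¹ • M y, hdet y h⟩ else 1, ?_, ?_⟩
  · rw [SL2C.isInducing_coe.continuousAt_iff]
    have hc : ContinuousAt (fun y : SL2C => (r y)⁻¹ • M y) x :=
      (hrc.inv₀ hrx).smul hcM.continuousAt
    refine hc.congr ?_
    filter_upwards [hcd.continuousAt.eventually_ne hx] with y hy
    simp [hy]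
  · intro y hy
    exact ⟨(r y)⁻¹, by simp [hy]⟩

/-- If `H` is the centralizer of `A`, the conjugates of `A` lie in `X`, and for every point of `X`
there is a continuous family of intertwiners from `y` to `A` invertible at that point, then the
orbit map is a homeomorphism from the space of right cosets of `H` onto `X`. -/
lemma exists_homeomorph_of_intertwiner (A : SL2C) (H : Subgroup SL2C) (X : Set SL2C)
    (hX : ∀ g : SL2C, g⁻¹ * A * g ∈ X) (hH : ∀ g : SL2C, g ∈ H ↔ A * g = g * A)
    (hs : ∀ x ∈ X, ∃ M : Matrix (Fin 2) (Fin 2) ℂ → Matrix (Fin 2) (Fin 2) ℂ, Continuous M ∧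
      (∀ y ∈ X, M y * (y : Matrix (Fin 2) (Fin 2) ℂ) = (A : Matrix (Fin 2) (Fin 2) ℂ) * M y) ∧
      (M x).det ≠ 0) :
    ∃ F : Quotient (QuotientGroup.rightRel H) ≃ₜ ↥X,
      ∀ g : SL2C, ((F (Quotient.mk (QuotientGroup.rightRel H) g) : SL2C) = g⁻¹ * A * g) := by
  have hsec : ∀ x : X, ∃ s : SL2C → SL2C, ContinuousAt s (x : SL2C) ∧
      ∀ᶠ y : X in 𝓝 x, (s y)⁻¹ * A * s y = y := by
    rintro ⟨x, hx⟩
    obtain ⟨M, hMc, hM, hMx⟩ := hs x hx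
    obtain ⟨s, hsc, hsM⟩ := exists_normalization M hMc x hMx
    refine ⟨s, hsc, ?_⟩
    have hcd : Continuous (fun y : X => (M (y : SL2C)).det) :=
      (hMc.comp (SL2C.isInducing_coe.continuous.comp continuous_subtype_val)).matrix_det
    filter_upwards [hcd.continuousAt.eventually_ne hMx] with y hy
    obtain ⟨c, hc⟩ := hsM y hy
    rw [mul_assoc, inv_mul_eq_iff_eq_mul]
    apply Subtype.ext
    rw [Matrix.SpecialLinearGroup.coe_mul, Matrix.SpecialLinearGroup.coe_mul, hc,
      Matrix.mul_smul, Matrix.smul_mul, hM y y.2]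
  have hrel : ∀ a b : SL2C, QuotientGroup.rightRel H a b ↔ a⁻¹ * A * a = b⁻¹ * A * b := by
    intro a b
    rw [QuotientGroup.rightRel_apply, hH]
    constructor
    · intro h
      calc a⁻¹ * A * a = b⁻¹ * (b * a⁻¹ * A) * a := by group
        _ = b⁻¹ * A * b := by rw [← h]; group
    · intro h
      calc A * (b * a⁻¹) = b * (b⁻¹ * A * b) * a⁻¹ := by group
        _ = b * a⁻¹ * A := by rw [← h]; group
  let f : SL2C → X := fun g => ⟨g⁻¹ * A * g, hX g⟩
  have hf : Continuous f := by
    refine Continuous.subtype_mk ?_ _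
    rw [SL2C.isInducing_coe.continuous_iff]
    have h1 := SL2C.isInducing_coe.continuous
    have h2 : Continuous fun g : SL2C => (g : Matrix (Fin 2) (Fin 2) ℂ).adjugate *
        (A : Matrix (Fin 2) (Fin 2) ℂ) * (g : Matrix (Fin 2) (Fin 2) ℂ) :=
      (h1.matrix_adjugate.matrix_mul continuous_const).matrix_mul h1
    refine h2.congr fun g => ?_
    simp
  let F : Quotient (QuotientGroup.rightRel H) → X :=
    Quotient.lift f fun a b h => Subtype.ext ((hrel a b).1 h)
  have hF : Continuous F := hf.quotient_lift _
  have hinj : Function.Injective F := by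
    intro p q
    induction p using Quotient.inductionOn
    induction q using Quotient.inductionOn
    intro h
    exact Quotient.sound ((hrel _ _).2 (congrArg Subtype.val h))
  have hsurj : Function.Surjective F := by
    intro x
    obtain ⟨s, -, h⟩ := hsec x
    exact ⟨Quotient.mk _ (s x), Subtype.ext h.self_of_nhds⟩
  let e := Equiv.ofBijective F ⟨hinj, hsurj⟩
  have hinv : Continuous e.symm := by
    rw [continuous_iff_continuousAt]
    intro x
    obtain ⟨s, hsc, h⟩ := hsec x
    have hc : ContinuousAt
        (fun y : X => (Quotient.mk (QuotientGroup.rightRel H) (s y))) x :=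
      continuous_quotient_mk'.continuousAt.comp
        (ContinuousAt.comp (f := fun y : X => (y : SL2C)) hsc continuous_subtype_val.continuousAt)
    refine hc.congr ?_
    filter_upwards [h] with y hy
    rw [Equiv.eq_symm_apply]
    exact Subtype.ext hy
  exact ⟨⟨e, hF, hinv⟩, fun g => rfl⟩

/-! ### Conjugation invariance and stabilizers -/

lemma conj_mem_XtSL {t : ℂ} {A : SL2C} (hA : A ∈ XtSL t) (g : SL2C) : g⁻¹ * A * g ∈ XtSL t := by
  obtain ⟨h1, h2, h3⟩ := hA
  refine ⟨?_, fun h => h2 ?_, fun h => h3 ?_⟩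
  · rw [Matrix.SpecialLinearGroup.coe_mul, Matrix.trace_mul_comm,
      ← Matrix.SpecialLinearGroup.coe_mul]
    simpa [mul_assoc] using h1
  · have h' : g⁻¹ * A * g = 1 := Subtype.ext h
    have : A = 1 := by
      calc A = g * (g⁻¹ * A * g) * g⁻¹ := by group
        _ = 1 := by rw [h']; group
    rw [this]; rfl
  · have h' : g⁻¹ * A * g = -1 := Subtype.ext (by simpa using h)
    have : A = -1 := by
      calc A = g * (g⁻¹ * A * g) * g⁻¹ := by group
        _ = -1 := by rw [h']; simp
    rw [this]; simp

/-- The entrywise content of membership in `X̃_t`: the trace and determinant equations. -/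
lemma XtSL.entries {t : ℂ} {y : SL2C} (hy : y ∈ XtSL t) :
    y.1 0 0 + y.1 1 1 = t ∧ y.1 0 0 * y.1 1 1 - y.1 0 1 * y.1 1 0 = 1 := by
  refine ⟨?_, ?_⟩
  · rw [← hy.1, Matrix.trace_fin_two]
  · rw [← Matrix.det_fin_two]; exact y.2

lemma mat_ext {P Q : Matrix (Fin 2) (Fin 2) ℂ} (h00 : P 0 0 = Q 0 0) (h01 : P 0 1 = Q 0 1)
    (h10 : P 1 0 = Q 1 0) (h11 : P 1 1 = Q 1 1) : P = Q := by
  ext i j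
  fin_cases i <;> fin_cases j <;> assumption

lemma mem_HparSL_iff {ε : ℂ} (A : SL2C)
    (hA : (A : Matrix (Fin 2) (Fin 2) ℂ) = !![ε, 1; 0, ε]) (g : SL2C) :
    g ∈ HparSL ↔ A * g = g * A := by
  have hd : g.1 0 0 * g.1 1 1 - g.1 0 1 * g.1 1 0 = 1 := by
    rw [← Matrix.det_fin_two]; exact g.2
  constructor
  · rintro ⟨δ, μ, -, hg⟩
    apply Subtype.ext
    rw [Matrix.SpecialLinearGroup.coe_mul, Matrix.SpecialLinearGroup.coe_mul, hA, hg]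
    apply mat_ext <;> simp [Matrix.mul_apply] <;> ring
  · intro h
    have h' := congrArg Subtype.val h
    rw [Matrix.SpecialLinearGroup.coe_mul, Matrix.SpecialLinearGroup.coe_mul, hA] at h'
    have h00 := congrFun (congrFun h' 0) 0
    have h01 := congrFun (congrFun h' 0) 1
    simp [Matrix.mul_apply] at h00 h01
    have hc : g.1 1 0 = 0 := by linear_combination h00
    have had : g.1 1 1 = g.1 0 0 := by linear_combination h01
    refine ⟨g.1 0 0, g.1 0 1, ?_, ?_⟩
    · rw [hc, had] at hd
      exact mul_self_eq_one_iff.1 (by linear_combination hd)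
    · apply mat_ext <;> simp [hc, had]

lemma mem_HdiagSL_iff {lam : ℂ} (hne : lam - lam⁻¹ ≠ 0) (A : SL2C)
    (hA : (A : Matrix (Fin 2) (Fin 2) ℂ) = !![lam, 0; 0, lam⁻¹]) (g : SL2C) :
    g ∈ HdiagSL ↔ A * g = g * A := by
  have hd : g.1 0 0 * g.1 1 1 - g.1 0 1 * g.1 1 0 = 1 := by
    rw [← Matrix.det_fin_two]; exact g.2
  constructor
  · rintro ⟨μ, -, hg⟩
    apply Subtype.ext
    rw [Matrix.SpecialLinearGroup.coe_mul, Matrix.SpecialLinearGroup.coe_mul, hA, hg]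
    apply mat_ext <;> simp [Matrix.mul_apply] <;> ring
  · intro h
    have h' := congrArg Subtype.val h
    rw [Matrix.SpecialLinearGroup.coe_mul, Matrix.SpecialLinearGroup.coe_mul, hA] at h'
    have h01 := congrFun (congrFun h' 0) 1
    have h10 := congrFun (congrFun h' 1) 0
    simp only [Matrix.mul_apply, Fin.sum_univ_two, Matrix.of_apply, Matrix.cons_val',
      Matrix.cons_val_zero, Matrix.cons_val_one, Matrix.cons_val_fin_one] at h01 h10
    have hb : g.1 0 1 = 0 := by
      refine (mul_eq_zero.1 ?_).resolve_left hne
      linear_combination h01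
    have hc : g.1 1 0 = 0 := by
      refine (mul_eq_zero.1 ?_).resolve_left hne
      linear_combination -h10
    rw [hb, hc, zero_mul, sub_zero] at hd
    refine ⟨g.1 0 0, left_ne_zero_of_mul_eq_one hd, ?_⟩
    apply mat_ext
    · simp
    · simpa using hb
    · simpa using hc
    · simpa using eq_inv_of_mul_eq_one_right hd

/-! ### Intertwiners -/

lemma exists_intertwiner_parabolic {ε : ℂ} (hε : ε * ε = 1) (x : SL2C) (hx : x ∈ XtSL (2 * ε)) :
    ∃ M : Matrix (Fin 2) (Fin 2) ℂ → Matrix (Fin 2) (Fin 2) ℂ, Continuous M ∧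
      (∀ y ∈ XtSL (2 * ε), M y * (y : Matrix (Fin 2) (Fin 2) ℂ) = !![ε, 1; 0, ε] * M y) ∧
      (M x).det ≠ 0 := by
  by_cases hb : x.1 0 1 = 0
  · by_cases hc : x.1 1 0 = 0
    · -- A diagonal matrix with double eigenvalue `ε` is scalar, which `X̃` excludes.
      exfalso
      obtain ⟨ht, hd⟩ := XtSL.entries hx
      have ha : x.1 0 0 = ε := by
        have : (x.1 0 0 - ε) ^ 2 = 0 := by
          linear_combination x.1 0 0 * ht - hd + hε - x.1 0 1 * hc
        exact sub_eq_zero.1 (pow_eq_zero_iff two_ne_zero |>.1 this)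
      have hdd : x.1 1 1 = ε := by linear_combination ht - ha
      rcases mul_self_eq_one_iff.1 hε with h | h
      · exact hx.2.1 (mat_ext (by simp [ha, h]) (by simp [hb]) (by simp [hc]) (by simp [hdd, h]))
      · exact hx.2.2 (mat_ext (by simp [ha, h]) (by simp [hb]) (by simp [hc]) (by simp [hdd, h]))
    · refine ⟨fun y => !![0, 1; y 1 0, y 1 1 - ε], by fun_prop, ?_, ?_⟩
      · intro y hy
        obtain ⟨ht, hd⟩ := XtSL.entries hy
        apply mat_ext <;> simp [Matrix.mul_apply]
        · linear_combination y.1 1 0 * ht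
        · linear_combination y.1 1 1 * ht - hd + hε
      · simpa [Matrix.det_fin_two] using hc
  · refine ⟨fun y => !![1, 0; y 0 0 - ε, y 0 1], by fun_prop, ?_, ?_⟩
    · intro y hy
      obtain ⟨ht, hd⟩ := XtSL.entries hy
      apply mat_ext <;> simp [Matrix.mul_apply]
      · linear_combination y.1 0 0 * ht - hd + hε
      · linear_combination y.1 0 1 * ht
    · simpa [Matrix.det_fin_two] using hb

/-- For row indices `i`, `j`: the matrix whose rows are row `i` of `y - λ⁻¹` and row `j` of
`y - λ`. -/
noncomputable def diagIntertwiner (lam : ℂ) (i j : Fin 2) (y : Matrix (Fin 2) (Fin 2) ℂ) :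
    Matrix (Fin 2) (Fin 2) ℂ :=
  Matrix.of ![(y - lam⁻¹ • 1) i, (y - lam • 1) j]

lemma diagIntertwiner_mul {lam : ℂ} (h0 : lam ≠ 0) (i j : Fin 2) (y : SL2C)
    (hy : y ∈ XtSL (lam + lam⁻¹)) :
    diagIntertwiner lam i j y * (y : Matrix (Fin 2) (Fin 2) ℂ) =
      !![lam, 0; 0, lam⁻¹] * diagIntertwiner lam i j y := by
  obtain ⟨ht, hd⟩ := XtSL.entries hy
  have hl : lam * lam⁻¹ = 1 := mul_inv_cancel₀ h0
  generalize hm : lam⁻¹ = m at *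
  apply mat_ext
  · fin_cases i <;> simp [diagIntertwiner, Matrix.mul_apply, hm]
    · linear_combination y.1 0 0 * ht - hd + hl
    · linear_combination y.1 1 0 * ht
  · fin_cases i <;> simp [diagIntertwiner, Matrix.mul_apply, hm]
    · linear_combination y.1 0 1 * ht
    · linear_combination y.1 1 1 * ht - hd + hl
  · fin_cases j <;> simp [diagIntertwiner, Matrix.mul_apply, hm]
    · linear_combination y.1 0 0 * ht - hd + hl
    · linear_combination y.1 1 0 * ht
  · fin_cases j <;> simp [diagIntertwiner, Matrix.mul_apply, hm]
    · linear_combination y.1 0 1 * ht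
    · linear_combination y.1 1 1 * ht - hd + hl

lemma exists_intertwiner_diag {lam : ℂ} (h0 : lam ≠ 0) (hne : lam - lam⁻¹ ≠ 0) (x : SL2C)
    (hx : x ∈ XtSL (lam + lam⁻¹)) :
    ∃ M : Matrix (Fin 2) (Fin 2) ℂ → Matrix (Fin 2) (Fin 2) ℂ, Continuous M ∧
      (∀ y ∈ XtSL (lam + lam⁻¹),
        M y * (y : Matrix (Fin 2) (Fin 2) ℂ) = !![lam, 0; 0, lam⁻¹] * M y) ∧
      (M x).det ≠ 0 := by
  suffices h : ∃ i j, (diagIntertwiner lam i j x).det ≠ 0 by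
    obtain ⟨i, j, h⟩ := h
    refine ⟨diagIntertwiner lam i j, ?_, diagIntertwiner_mul h0 i j, h⟩
    refine continuous_matrix fun a b => ?_
    fin_cases a <;> simp [diagIntertwiner] <;> fun_prop
  obtain ⟨ht, hd⟩ := XtSL.entries hx
  by_contra! hcon
  -- If the determinants all vanish, `x` is triangular and its upper left entry would equal both
  -- `λ` and `λ⁻¹`.
  have h00 := hcon 0 0
  have h01 := hcon 0 1
  have h10 := hcon 1 0
  simp [diagIntertwiner, Matrix.det_fin_two] at h00 h01 h10
  have hb : x.1 0 1 = 0 := by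
    refine (mul_eq_zero.1 ?_).resolve_left hne
    linear_combination h00
  have h1 : (x.1 0 0 - lam⁻¹) ^ 2 = 0 := by
    linear_combination (x.1 0 0 - lam⁻¹) * ht - h01 - x.1 1 0 * hb
  have h2 : (x.1 0 0 - lam) ^ 2 = 0 := by
    linear_combination (x.1 0 0 - lam) * ht + h10 - x.1 1 0 * hb
  have h1' := (pow_eq_zero_iff two_ne_zero).1 h1
  have h2' := (pow_eq_zero_iff two_ne_zero).1 h2
  exact hne (by linear_combination h1' - h2')

/-! ### The coset space -/

/-- for every `t ∈ ℂ`, the map `F : H̃_t\SL(2,ℂ) → X̃_t`,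
`F(H̃_t g) = g⁻¹ A_t g`, is a well-defined homeomorphism, where `H̃_t\SL(2,ℂ)` carries
the quotient topology and `X̃_t` the subspace topology. -/
theorem homeomorph_coset_space_to_Xt :
    (∀ ε : ℂ, (ε = 1 ∨ ε = -1) → ∀ At : SL2C,
      (At : Matrix (Fin 2) (Fin 2) ℂ) = !![ε, 1; 0, ε] →
      ∀ H : Subgroup SL2C, (H : Set SL2C) = HparSL →
      ∃ F : Quotient (QuotientGroup.rightRel H) ≃ₜ ↥(XtSL (2 * ε)),
        ∀ g : SL2C, ((F (Quotient.mk (QuotientGroup.rightRel H) g) : SL2C)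
          = g⁻¹ * At * g)) ∧
    (∀ t lam : ℂ, t ≠ 2 → t ≠ -2 → lam ≠ 0 → lam + lam⁻¹ = t →
      ∀ At : SL2C, (At : Matrix (Fin 2) (Fin 2) ℂ) = !![lam, 0; 0, lam⁻¹] →
      ∀ H : Subgroup SL2C, (H : Set SL2C) = HdiagSL →
      ∃ F : Quotient (QuotientGroup.rightRel H) ≃ₜ ↥(XtSL t),
        ∀ g : SL2C, ((F (Quotient.mk (QuotientGroup.rightRel H) g) : SL2C)
          = g⁻¹ * At * g)) := by
  refine ⟨?_, ?_⟩
  · intro ε hε A hA H hH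
    have hε' : ε * ε = 1 := mul_self_eq_one_iff.2 hε
    have hmem : A ∈ XtSL (2 * ε) := by
      refine ⟨?_, fun h => ?_, fun h => ?_⟩
      · rw [hA, Matrix.trace_fin_two]
        simp [two_mul]
      all_goals
        rw [hA] at h
        simpa using congrFun (congrFun h 0) 1
    refine exists_homeomorph_of_intertwiner A H _ (conj_mem_XtSL hmem) (fun g => ?_) ?_
    · rw [← mem_HparSL_iff A hA g, ← hH]; rfl
    · rw [hA]
      exact exists_intertwiner_parabolic hε'
  · rintro t lam ht2 ht2' h0 rfl A hA H hH
    have hne : lam - lam⁻¹ ≠ 0 := by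
      intro h
      have hl : lam * lam = 1 := by
        calc lam * lam = lam * lam⁻¹ := by rw [← sub_eq_zero.1 h]
          _ = 1 := mul_inv_cancel₀ h0
      rcases mul_self_eq_one_iff.1 hl with rfl | rfl
      · exact ht2 (by norm_num)
      · exact ht2' (by norm_num)
    have hmem : A ∈ XtSL (lam + lam⁻¹) := by
      refine ⟨?_, fun h => hne ?_, fun h => hne ?_⟩
      · rw [hA, Matrix.trace_fin_two]
        simp
      all_goals
        rw [hA] at h
        have h00 := congrFun (congrFun h 0) 0
        simp at h00
        rw [h00]
        norm_num
    refine exists_homeomorph_of_intertwiner A H _ (conj_mem_XtSL hmem) (fun g => ?_) ?_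
    · rw [← mem_HdiagSL_iff hne A hA g, ← hH]; rfl
    · rw [hA]
      exact exists_intertwiner_diag h0 hne
end

section
/- For every t ∈ ℂ, the subset X̃_t generates SL(2,ℂ) as a group, i.e. the subgroup of SL(2,ℂ) generated by X̃_t is all of SL(2,ℂ). -/
/-!
`SL(2,ℂ)` is generated by the upper and lower unipotent matrices, so it suffices to obtain these
from `X̃_t`. Write `t = p + p⁻¹` with `p ≠ 0`, which is possible over `ℂ`. Two upper triangular
matrices with diagonal `(p, p⁻¹)` and nonzero corner entries `x`, `x + p z` both lie in `X̃_t`, and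
the inverse of the first times the second is the upper unipotent matrix with corner entry `z`.
The lower unipotent matrices arise in the same way.

A matrix with lower left entry `c ≠ 0` is an explicit product upper · lower · upper of unipotents
(`eq_upper_mul_lower_mul_upper`); if `c = 0`, multiplying by a lower unipotent reduces to that case.
-/

open Matrix

/-- The upper unipotent matrix with corner entry `z`. -/
def upperUnip (z : ℂ) : SL2C := ⟨!![1, z; 0, 1], by simp [Matrix.det_fin_two]⟩

/-- The lower unipotent matrix with corner entry `z`. -/
def lowerUnip (z : ℂ) : SL2C := ⟨!![1, 0; z, 1], by simp [Matrix.det_fin_two]⟩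

lemma upperUnip_coe (z : ℂ) : (upperUnip z).1 = !![1, z; 0, 1] := rfl

lemma lowerUnip_coe (z : ℂ) : (lowerUnip z).1 = !![1, 0; z, 1] := rfl

lemma exists_add_inv_eq (t : ℂ) : ∃ p q : ℂ, p * q = 1 ∧ p + q = t := by
  obtain ⟨s, hs⟩ := IsAlgClosed.exists_pow_nat_eq (t ^ 2 - 4) (n := 2) (by norm_num)
  exact ⟨(t + s) / 2, (t - s) / 2, by linear_combination -hs / 4, by ring⟩

lemma exists_ne_zero_add_ne_zero (w : ℂ) : ∃ x : ℂ, x ≠ 0 ∧ x + w ≠ 0 := by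
  by_cases h : 1 + w = 0
  · exact ⟨2, by norm_num, fun h2 => one_ne_zero (α := ℂ) (by linear_combination h2 - h)⟩
  · exact ⟨1, one_ne_zero, h⟩

lemma upperUnip_mem (t z : ℂ) : upperUnip z ∈ Subgroup.closure (XtSL t) := by
  obtain ⟨p, q, hpq, ht⟩ := exists_add_inv_eq t
  have key : ∀ x : ℂ, x ≠ 0 →
      ∃ A : SL2C, A ∈ Subgroup.closure (XtSL t) ∧ A.1 = !![p, x; 0, q] := by
    intro x hx
    refine ⟨⟨!![p, x; 0, q], by simp [Matrix.det_fin_two, hpq]⟩, Subgroup.subset_closure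
      ⟨by simp [Matrix.trace_fin_two, ht], fun h => hx ?_, fun h => hx ?_⟩, rfl⟩
    · simpa using congrFun (congrFun h 0) 1
    · simpa using congrFun (congrFun h 0) 1
  obtain ⟨x, hx, hy⟩ := exists_ne_zero_add_ne_zero (p * z)
  obtain ⟨A, hA, hA'⟩ := key x hx
  obtain ⟨B, hB, hB'⟩ := key _ hy
  have hAB : A * upperUnip z = B := by
    apply Subtype.ext
    rw [Matrix.SpecialLinearGroup.coe_mul, hA', hB', upperUnip_coe]
    simp [add_comm]
  rw [← Subgroup.mul_mem_cancel_left _ hA, hAB]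
  exact hB

lemma lowerUnip_mem (t z : ℂ) : lowerUnip z ∈ Subgroup.closure (XtSL t) := by
  obtain ⟨p, q, hpq, ht⟩ := exists_add_inv_eq t
  have key : ∀ x : ℂ, x ≠ 0 →
      ∃ A : SL2C, A ∈ Subgroup.closure (XtSL t) ∧ A.1 = !![p, 0; x, q] := by
    intro x hx
    refine ⟨⟨!![p, 0; x, q], by simp [Matrix.det_fin_two, hpq]⟩, Subgroup.subset_closure
      ⟨by simp [Matrix.trace_fin_two, ht], fun h => hx ?_, fun h => hx ?_⟩, rfl⟩
    · simpa using congrFun (congrFun h 1) 0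
    · simpa using congrFun (congrFun h 1) 0
  obtain ⟨x, hx, hy⟩ := exists_ne_zero_add_ne_zero (q * z)
  obtain ⟨A, hA, hA'⟩ := key x hx
  obtain ⟨B, hB, hB'⟩ := key _ hy
  have hAB : A * lowerUnip z = B := by
    apply Subtype.ext
    rw [Matrix.SpecialLinearGroup.coe_mul, hA', hB', lowerUnip_coe]
    simp [add_comm]
  rw [← Subgroup.mul_mem_cancel_left _ hA, hAB]
  exact hB

lemma eq_upper_mul_lower_mul_upper (M : SL2C) (hc : M.1 1 0 ≠ 0) :
    M = upperUnip ((M.1 0 0 - 1) / M.1 1 0) * lowerUnip (M.1 1 0) *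
      upperUnip ((M.1 1 1 - 1) / M.1 1 0) := by
  have hdet := M.2
  rw [Matrix.det_fin_two] at hdet
  apply Subtype.ext
  rw [Matrix.SpecialLinearGroup.coe_mul, Matrix.SpecialLinearGroup.coe_mul, upperUnip_coe,
    lowerUnip_coe, upperUnip_coe]
  generalize M.1 = N at *
  ext i j
  fin_cases i <;> fin_cases j <;> simp [hc]
  · field_simp
    linear_combination -hdet
  · field_simp
    ring

lemma mem_closure_of_ne_zero (t : ℂ) (M : SL2C) (hc : M.1 1 0 ≠ 0) :
    M ∈ Subgroup.closure (XtSL t) := by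
  rw [eq_upper_mul_lower_mul_upper M hc]
  exact mul_mem (mul_mem (upperUnip_mem t _) (lowerUnip_mem t _)) (upperUnip_mem t _)

/-- for every `t ∈ ℂ`, the subset `X̃_t` generates `SL(2,ℂ)` as a group. -/
theorem Xt_generates_SL2C (t : ℂ) : Subgroup.closure (XtSL t) = ⊤ := by
  refine (Subgroup.eq_top_iff' _).2 fun M => ?_
  by_cases hc : M.1 1 0 = 0
  · -- Right multiplication by `lowerUnip 1` turns the lower left entry into `M 1 1 ≠ 0`.
    rw [← Subgroup.mul_mem_cancel_right _ (lowerUnip_mem t 1)]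
    apply mem_closure_of_ne_zero
    have hdet := M.2
    rw [Matrix.det_fin_two, hc] at hdet
    intro h
    rw [Matrix.SpecialLinearGroup.coe_mul, lowerUnip_coe] at h
    have h1 : M.1 1 1 = 0 := by
      simpa [Matrix.mul_apply, Fin.sum_univ_two, hc] using h
    simp [h1] at hdet
  · exact mem_closure_of_ne_zero t M hc
end

section
/- For every t ∈ ℂ, the conjugation quandle Conj(X̃_t) is connected: for all A, B ∈ X̃_t there exists an element g of the subgroup of SL(2,ℂ) generated by X̃_t such that g⁻¹ A g = B. (Equivalently, B is obtained from A by a finite sequence of point symmetries s_C(x) = C⁻¹xC, C ∈ X̃_t, and their inverses.) -/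
/-!
Two facts give the theorem.

* `exists_conj_companion`: a non-scalar `A ∈ SL(2,ℂ)` has a vector `v` with `det (v, A v) ≠ 0`;
  rescaling `v` by a square root makes this determinant `1`, and then `(v, A v) ∈ SL(2,ℂ)`
  conjugates `A` to the companion matrix of its characteristic polynomial. So any two elements of
  `X̃_t` are conjugate in `SL(2,ℂ)`.
* `closure_XtSL`: `X̃_t` generates `SL(2,ℂ)`. If `d² - t d + 1 = 0`, then for `b ≠ 0` the upper
  (lower) triangular matrices with diagonal `(t - d, d)` (resp. `(d, t - d)`) and off-diagonal
  entry `b` lie in `X̃_t`, and quotients of two of the same kind include all the transvections, which generate `SL(2,ℂ)`.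
-/

open Matrix

/-- The element of `SL(2,ℂ)` with rows `(a, b)` and `(c, d)`. -/
def mkSL (a b c d : ℂ) (h : a * d - b * c = 1) : SL2C :=
  ⟨!![a, b; c, d], by rw [Matrix.det_fin_two_of, h]⟩

lemma coe_mkSL (a b c d : ℂ) (h : a * d - b * c = 1) : (mkSL a b c d h).1 = !![a, b; c, d] := rfl

/-- The upper transvection with off-diagonal entry `s`. -/
def upperSL (s : ℂ) : SL2C := mkSL 1 s 0 1 (by simp)

/-- The lower transvection with off-diagonal entry `s`. -/
def lowerSL (s : ℂ) : SL2C := mkSL 1 0 s 1 (by simp)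

/-- The companion matrix of `X² - t X + 1`. -/
def companionSL (t : ℂ) : SL2C := mkSL 0 (-1) 1 t (by simp)

lemma exists_root (t : ℂ) : ∃ d : ℂ, (t - d) * d = 1 := by
  obtain ⟨w, hw⟩ := IsAlgClosed.exists_pow_nat_eq (t ^ 2 - 4) (n := 2) (by norm_num)
  exact ⟨(t + w) / 2, by linear_combination -hw / 4⟩

lemma exists_ne_zero_add_ne_zero_s9 (s : ℂ) : ∃ b : ℂ, b ≠ 0 ∧ b + s ≠ 0 := by
  by_cases h : 1 + s = 0
  · exact ⟨2, by norm_num, fun h' => one_ne_zero (α := ℂ) (by linear_combination h' - h)⟩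
  · exact ⟨1, one_ne_zero, h⟩

lemma upperSL_mem (t s : ℂ) : upperSL s ∈ Subgroup.closure (XtSL t) := by
  obtain ⟨d, hd⟩ := exists_root t
  obtain ⟨b, hb, hbs⟩ := exists_ne_zero_add_ne_zero_s9 (s * d)
  have key : ∀ c : ℂ, c ≠ 0 → ∀ h : (t - d) * d - c * 0 = 1,
      mkSL (t - d) c 0 d h ∈ Subgroup.closure (XtSL t) := by
    intro c hc h
    refine Subgroup.subset_closure ⟨by simp [coe_mkSL, Matrix.trace_fin_two],
      fun e => hc ?_, fun e => hc ?_⟩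
    · simpa [coe_mkSL] using congrFun (congrFun e 0) 1
    · simpa [coe_mkSL] using congrFun (congrFun e 0) 1
  have h1 := key b hb (by simp [hd])
  have h2 := key (b + s * d) hbs (by simp [hd])
  rw [← Subgroup.mul_mem_cancel_right _ h1]
  convert h2 using 1
  ext i j
  fin_cases i <;> fin_cases j <;> simp [upperSL, coe_mkSL, Matrix.mul_apply, Fin.sum_univ_two]

lemma lowerSL_mem (t s : ℂ) : lowerSL s ∈ Subgroup.closure (XtSL t) := by
  obtain ⟨d, hd⟩ := exists_root t
  obtain ⟨b, hb, hbs⟩ := exists_ne_zero_add_ne_zero_s9 (s * d)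
  have key : ∀ c : ℂ, c ≠ 0 → ∀ h : d * (t - d) - 0 * c = 1,
      mkSL d 0 c (t - d) h ∈ Subgroup.closure (XtSL t) := by
    intro c hc h
    refine Subgroup.subset_closure ⟨by simp [coe_mkSL, Matrix.trace_fin_two],
      fun e => hc ?_, fun e => hc ?_⟩
    · simpa [coe_mkSL] using congrFun (congrFun e 1) 0
    · simpa [coe_mkSL] using congrFun (congrFun e 1) 0
  have h1 := key b hb (by simp [mul_comm d, hd])
  have h2 := key (b + s * d) hbs (by simp [mul_comm d, hd])
  rw [← Subgroup.mul_mem_cancel_right _ h1]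
  convert h2 using 1
  ext i j
  fin_cases i <;> fin_cases j <;>
    simp [lowerSL, coe_mkSL, Matrix.mul_apply, Fin.sum_univ_two, add_comm]

/-- Gaussian elimination when the lower left entry is available as a pivot. -/
lemma eq_upper_lower_upper (M : SL2C) (h : M.1 1 0 ≠ 0) :
    M = upperSL ((M.1 0 0 - 1) / M.1 1 0) * lowerSL (M.1 1 0) *
      upperSL ((M.1 1 1 - 1) / M.1 1 0) := by
  have hdet := M.2
  rw [Matrix.det_fin_two] at hdet
  ext i j
  fin_cases i <;> fin_cases j <;>
    simp [upperSL, lowerSL, coe_mkSL, Matrix.mul_apply, Fin.sum_univ_two] <;> field_simp <;>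
    first | ring1 | linear_combination -hdet

lemma closure_XtSL (t : ℂ) (M : SL2C) : M ∈ Subgroup.closure (XtSL t) := by
  have pivot : ∀ M : SL2C, M.1 1 0 ≠ 0 → M ∈ Subgroup.closure (XtSL t) := fun M h => by
    rw [eq_upper_lower_upper M h]
    exact mul_mem (mul_mem (upperSL_mem t _) (lowerSL_mem t _)) (upperSL_mem t _)
  by_cases h : M.1 1 0 = 0
  · -- Adding the first row to the second one creates a nonzero pivot.
    rw [← Subgroup.mul_mem_cancel_left _ (lowerSL_mem t 1)]
    apply pivot
    have hdet := M.2
    rw [Matrix.det_fin_two, h] at hdet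
    intro h0
    have h00 : M.1 0 0 = 0 := by
      simpa [lowerSL, coe_mkSL, Matrix.mul_apply, Fin.sum_univ_two, h] using h0
    simp [h00] at hdet
  · exact pivot M h

/-- For non-scalar `A`, the quadratic form `v ↦ det (v, A v)` is not identically zero. -/
lemma exists_cyclic_vector (A : SL2C) (h1 : A.1 ≠ 1) (h2 : A.1 ≠ -1) :
    ∃ x y : ℂ, x * (A.1 1 0 * x + A.1 1 1 * y) - (A.1 0 0 * x + A.1 0 1 * y) * y ≠ 0 := by
  by_contra! H
  have hc : A.1 1 0 = 0 := by simpa using H 1 0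
  have hb : A.1 0 1 = 0 := by simpa using H 0 1
  have hd : A.1 1 1 = A.1 0 0 := by simpa [hb, hc, sub_eq_zero] using H 1 1
  have hdet := A.2
  rw [Matrix.det_fin_two, hc, hb, hd, mul_zero, sub_zero, mul_self_eq_one_iff] at hdet
  rcases hdet with h | h
  · apply h1
    ext i j
    fin_cases i <;> fin_cases j <;> simp [hb, hc, hd, h]
  · apply h2
    ext i j
    fin_cases i <;> fin_cases j <;> simp [hb, hc, hd, h]

lemma exists_conj_companion (t : ℂ) (A : SL2C) (hA : A ∈ XtSL t) :
    ∃ P : SL2C, A * P = P * companionSL t := by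
  obtain ⟨htr, h1, h2⟩ := hA
  obtain ⟨x, y, hq⟩ := exists_cyclic_vector A h1 h2
  obtain ⟨r, hr⟩ := IsAlgClosed.exists_pow_nat_eq
    (x * (A.1 1 0 * x + A.1 1 1 * y) - (A.1 0 0 * x + A.1 0 1 * y) * y)⁻¹ (n := 2) (by norm_num)
  have hr' := inv_mul_cancel₀ hq
  rw [← hr] at hr'
  have hdet := A.2
  rw [Matrix.det_fin_two] at hdet
  rw [Matrix.trace_fin_two] at htr
  refine ⟨mkSL (r * x) (r * (A.1 0 0 * x + A.1 0 1 * y)) (r * y)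
    (r * (A.1 1 0 * x + A.1 1 1 * y)) (by linear_combination hr'), ?_⟩
  subst htr
  -- The second columns agree by the Cayley–Hamilton theorem.
  ext i j
  fin_cases i <;> fin_cases j <;>
    simp [companionSL, coe_mkSL, Matrix.mul_apply, Fin.sum_univ_two]
  · ring
  · linear_combination (-r * x) * hdet
  · ring
  · linear_combination (-r * y) * hdet

/-- for every `t ∈ ℂ`, the conjugation quandle `Conj(X̃_t)` is connected:
any two elements `A, B ∈ X̃_t` are conjugate by an element of the subgroup generated
by `X̃_t` (i.e. `B` is obtained from `A` by point symmetries and their inverses). -/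
theorem Conj_Xt_connected (t : ℂ) (A B : SL2C) (hA : A ∈ XtSL t) (hB : B ∈ XtSL t) :
    ∃ g ∈ Subgroup.closure (XtSL t), g⁻¹ * A * g = B := by
  obtain ⟨P, hP⟩ := exists_conj_companion t A hA
  obtain ⟨Q, hQ⟩ := exists_conj_companion t B hB
  refine ⟨P * Q⁻¹, closure_XtSL t _, ?_⟩
  calc (P * Q⁻¹)⁻¹ * A * (P * Q⁻¹) = Q * P⁻¹ * (A * P) * Q⁻¹ := by group
    _ = Q * companionSL t * Q⁻¹ := by rw [hP]; group
    _ = B := by rw [← hQ]; group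
end

section
/- For every τ ∈ 𝒯 and every g ∈ PSL(2,ℂ): g commutes with f_τ if and only if g ∈ H_τ. In other words, H_τ is exactly the centralizer of f_τ in PSL(2,ℂ), i.e. the stabilizer of f_τ under the right conjugation action f · g := g⁻¹ f g of PSL(2,ℂ) on itself. -/
/-!
Two matrices of `SL(2,ℂ)` have the same image in `PSL(2,ℂ)` exactly when they agree up to sign
(`prSL_eq_iff`), so a lift `B` of `g` commutes with `f_τ = π(A)` exactly when `BA = AB` or
`BA = -AB` (`prSL_comm_iff`). Comparing the entries of a matrix `B = (a b; c d)` settles each case.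

For `A = (1 1; 0 1)`, the equation `BA = AB` forces `c = 0` and `a = d = ±1`, so `B` or `-B` is
unitriangular, and `BA = -AB` forces `a = c = 0`, against `det B = 1`.

For `A = diag(λ, λ⁻¹)` with `λ ≠ ±1`, the equation `BA = AB` forces `b = c = 0`, and `BA = -AB`
forces `a = d = 0` and `b (λ + λ⁻¹) = 0`; as `det B = 1`, the latter happens only if
`λ + λ⁻¹ = 0`, where it gives the antidiagonal component of `H_[0]`.
-/

open Matrix

/-- `PSL(2,ℂ) = SL(2,ℂ)/{±I}` (the center of `SL(2,ℂ)` is `{±I}`). -/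
abbrev PSL2C := Matrix.ProjectiveSpecialLinearGroup (Fin 2) ℂ

/-- The projection `π : SL(2,ℂ) → PSL(2,ℂ)`. -/
def prSL : SL2C →* PSL2C := QuotientGroup.mk' (Subgroup.center SL2C)

/-- `X_τ` for `τ = [t]`: the nontrivial elements of `PSL(2,ℂ)` admitting a lift of
trace `t` or `−t`. -/
def XtauP (t : ℂ) : Set PSL2C :=
  {f | f ≠ 1 ∧ ∃ A : SL2C, prSL A = f ∧
    (Matrix.trace (A : Matrix (Fin 2) (Fin 2) ℂ) = t ∨
     Matrix.trace (A : Matrix (Fin 2) (Fin 2) ℂ) = -t)}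

/-- `H_[2]`: the image in `PSL(2,ℂ)` of the upper unitriangular matrices. -/
def HparP : Set PSL2C :=
  {f | ∃ B : SL2C, prSL B = f ∧ ∃ v : ℂ, (B : Matrix (Fin 2) (Fin 2) ℂ) = !![1, v; 0, 1]}

/-- `H_τ` for `τ ∉ {[0],[2]}`: the image in `PSL(2,ℂ)` of the diagonal matrices. -/
def HdiagP : Set PSL2C :=
  {f | ∃ B : SL2C, prSL B = f ∧
    ∃ μ : ℂ, μ ≠ 0 ∧ (B : Matrix (Fin 2) (Fin 2) ℂ) = !![μ, 0; 0, μ⁻¹]}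

/-- `H_[0]`: the image in `PSL(2,ℂ)` of the diagonal and antidiagonal matrices. -/
def HzeroP : Set PSL2C :=
  HdiagP ∪ {f | ∃ B : SL2C, prSL B = f ∧
    ∃ μ : ℂ, μ ≠ 0 ∧ (B : Matrix (Fin 2) (Fin 2) ℂ) = !![0, μ; -μ⁻¹, 0]}

/-- The fibres of `π` are the pairs `{A, -A}`: a central element of `SL(2,ℂ)` is a scalar matrix
whose scalar squares to `1`. -/
lemma prSL_eq_iff (A B : SL2C) : prSL A = prSL B ↔ B = A ∨ B = -A := by
  have h : prSL A = prSL B ↔ A⁻¹ * B ∈ Subgroup.center SL2C := QuotientGroup.eq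
  rw [h, Matrix.SpecialLinearGroup.mem_center_iff]
  constructor
  · rintro ⟨r, hr, hs⟩
    have hr' : r = 1 ∨ r = -1 := by simpa using hr
    rcases hr' with rfl | rfl
    · left
      have : A⁻¹ * B = 1 := by
        apply Subtype.ext
        rw [← hs]
        simp
      exact (inv_mul_eq_one.mp this).symm
    · right
      have : A⁻¹ * B = -1 := by
        apply Subtype.ext
        rw [← hs, map_neg, map_one]
        simp
      rw [inv_mul_eq_iff_eq_mul] at this
      simpa using this
  · rintro (rfl | rfl)
    · exact ⟨1, by simp, by simp⟩
    · refine ⟨-1, by simp, ?_⟩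
      rw [mul_neg, inv_mul_cancel, map_neg, map_one]
      simp

lemma prSL_neg (B : SL2C) : prSL (-B) = prSL B :=
  ((prSL_eq_iff B (-B)).2 (Or.inr rfl)).symm

lemma prSL_comm_iff (A B : SL2C) : prSL B * prSL A = prSL A * prSL B ↔
    (A : Matrix (Fin 2) (Fin 2) ℂ) * B = (B : Matrix (Fin 2) (Fin 2) ℂ) * A ∨
    (A : Matrix (Fin 2) (Fin 2) ℂ) * B = -((B : Matrix (Fin 2) (Fin 2) ℂ) * A) := by
  have key : ∀ X Y : SL2C, X = Y ↔ (X : Matrix (Fin 2) (Fin 2) ℂ) = Y := fun _ _ => Subtype.ext_iff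
  rw [← map_mul, ← map_mul, prSL_eq_iff, key (A * B) (B * A), key (A * B) (-(B * A))]
  simp

lemma SL2C_eta (B : SL2C) : ∃ a b c d : ℂ, a * d - b * c = 1 ∧
    (B : Matrix (Fin 2) (Fin 2) ℂ) = !![a, b; c, d] :=
  ⟨B 0 0, B 0 1, B 1 0, B 1 1, by rw [← Matrix.det_fin_two, B.2], Matrix.eta_fin_two _⟩

/-- Entrywise form of commutation in `PSL(2,ℂ)` with a diagonal matrix. -/
lemma prSL_comm_diag_iff {A B : SL2C} {lam a b c d : ℂ} (hl : lam ≠ 0)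
    (hA : (A : Matrix (Fin 2) (Fin 2) ℂ) = !![lam, 0; 0, lam⁻¹])
    (hB : (B : Matrix (Fin 2) (Fin 2) ℂ) = !![a, b; c, d]) :
    prSL B * prSL A = prSL A * prSL B ↔
      ((lam - lam⁻¹) * b = 0 ∧ (lam - lam⁻¹) * c = 0) ∨
      (a = 0 ∧ d = 0 ∧ (lam + lam⁻¹) * b = 0 ∧ (lam + lam⁻¹) * c = 0) := by
  rw [prSL_comm_iff, hA, hB]
  have hi : lam⁻¹ ≠ 0 := inv_ne_zero hl
  generalize lam⁻¹ = m at hi ⊢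
  simp only [Matrix.mul_fin_two, ← Matrix.ext_iff, Fin.forall_fin_two, Matrix.neg_apply,
    Matrix.of_apply, Matrix.cons_val_zero, Matrix.cons_val_one, zero_mul, mul_zero, add_zero,
    zero_add]
  constructor
  · rintro (⟨⟨-, h1⟩, h2, -⟩ | ⟨⟨h1, h2⟩, h3, h4⟩)
    · left
      constructor <;> grind
    · right
      refine ⟨?_, ?_, ?_, ?_⟩ <;> grind
  · rintro (⟨h1, h2⟩ | ⟨rfl, rfl, h1, h2⟩)
    · left
      grind
    · right
      grind

lemma mem_HdiagP_of_entries {B : SL2C} {a d : ℂ} (hdet : a * d = 1)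
    (hB : (B : Matrix (Fin 2) (Fin 2) ℂ) = !![a, 0; 0, d]) : prSL B ∈ HdiagP := by
  refine ⟨B, rfl, a, left_ne_zero_of_mul_eq_one hdet, ?_⟩
  rw [hB, eq_inv_of_mul_eq_one_right hdet]

/-- Diagonal matrices commute. -/
lemma comm_of_mem_HdiagP {A : SL2C} {lam : ℂ} (hl : lam ≠ 0)
    (hA : (A : Matrix (Fin 2) (Fin 2) ℂ) = !![lam, 0; 0, lam⁻¹]) {g : PSL2C} (hg : g ∈ HdiagP) :
    g * prSL A = prSL A * g := by
  obtain ⟨B, rfl, μ, -, hB⟩ := hg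
  rw [prSL_comm_diag_iff hl hA hB]
  simp

/-- for every `τ ∈ 𝒯` and `g ∈ PSL(2,ℂ)`, `g` commutes with `f_τ` iff
`g ∈ H_τ`; i.e. `H_τ` is the centralizer (= conjugation stabilizer) of `f_τ`. -/
theorem centralizer_of_ftau :
    (∀ A : SL2C, (A : Matrix (Fin 2) (Fin 2) ℂ) = !![1, 1; 0, 1] →
      ∀ g : PSL2C, (g * prSL A = prSL A * g ↔ g ∈ HparP)) ∧
    (∀ t lam : ℂ, t ≠ 2 → t ≠ -2 → t ≠ 0 → lam ≠ 0 → lam + lam⁻¹ = t →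
      ∀ A : SL2C, (A : Matrix (Fin 2) (Fin 2) ℂ) = !![lam, 0; 0, lam⁻¹] →
      ∀ g : PSL2C, (g * prSL A = prSL A * g ↔ g ∈ HdiagP)) ∧
    (∀ lam : ℂ, lam ≠ 0 → lam + lam⁻¹ = 0 →
      ∀ A : SL2C, (A : Matrix (Fin 2) (Fin 2) ℂ) = !![lam, 0; 0, lam⁻¹] →
      ∀ g : PSL2C, (g * prSL A = prSL A * g ↔ g ∈ HzeroP)) := by
  refine ⟨?_, ?_, ?_⟩
  · intro A hA g
    constructor
    · obtain ⟨B, rfl⟩ : ∃ B, prSL B = g := QuotientGroup.mk'_surjective _ g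
      obtain ⟨a, b, c, d, hdet, hB⟩ := SL2C_eta B
      rw [prSL_comm_iff, hA, hB]
      simp only [Matrix.mul_fin_two, ← Matrix.ext_iff, Fin.forall_fin_two, Matrix.neg_apply,
        Matrix.of_apply, Matrix.cons_val_zero, Matrix.cons_val_one, zero_mul, mul_zero, add_zero,
        zero_add, one_mul, mul_one]
      rintro (⟨⟨h1, h2⟩, -, -⟩ | ⟨⟨h1, h2⟩, h3, h4⟩)
      · have hc : c = 0 := by linear_combination h1
        have hd : d = a := by linear_combination h2
        subst hc hd
        have ha : d = 1 ∨ d = -1 := by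
          rw [← sq_eq_one_iff]
          linear_combination hdet
        rcases ha with rfl | rfl
        · exact ⟨B, rfl, b, hB⟩
        · refine ⟨-B, prSL_neg B, -b, ?_⟩
          rw [Matrix.SpecialLinearGroup.coe_neg, hB]
          simp
      · exfalso
        have hc : c = 0 := by linear_combination h3 / 2
        have ha : a = 0 := by linear_combination h1 / 2 - hc / 2
        simp [hc, ha] at hdet
    · rintro ⟨B, rfl, v, hB⟩
      rw [prSL_comm_iff, hA, hB]
      left
      simp [add_comm]
  · intro t lam h2 h2' h0 hl ht A hA g
    refine ⟨?_, comm_of_mem_HdiagP hl hA⟩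
    obtain ⟨B, rfl⟩ : ∃ B, prSL B = g := QuotientGroup.mk'_surjective _ g
    obtain ⟨a, b, c, d, hdet, hB⟩ := SL2C_eta B
    rw [prSL_comm_diag_iff hl hA hB]
    -- `λ = λ⁻¹` would give `λ = ±1`, hence `t = ±2`.
    have hne : lam - lam⁻¹ ≠ 0 := by
      intro h
      have hm : lam * lam⁻¹ = 1 := mul_inv_cancel₀ hl
      have : (t - 2) * (t + 2) = 0 := by
        rw [← ht]
        linear_combination (lam - lam⁻¹) * h + 4 * hm
      grind
    rintro (⟨hb, hc⟩ | ⟨rfl, rfl, hb, hc⟩)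
    · obtain rfl : b = 0 := (mul_eq_zero.mp hb).resolve_left hne
      obtain rfl : c = 0 := (mul_eq_zero.mp hc).resolve_left hne
      exact mem_HdiagP_of_entries (by simpa using hdet) hB
    · rw [ht] at hb
      obtain rfl : b = 0 := (mul_eq_zero.mp hb).resolve_left h0
      simp at hdet
  · intro lam hl ht A hA g
    constructor
    · obtain ⟨B, rfl⟩ : ∃ B, prSL B = g := QuotientGroup.mk'_surjective _ g
      obtain ⟨a, b, c, d, hdet, hB⟩ := SL2C_eta B
      rw [prSL_comm_diag_iff hl hA hB]
      -- Here `λ⁻¹ = -λ`, so the difference is `2λ`.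
      have hne : lam - lam⁻¹ ≠ 0 := by
        intro h
        apply hl
        linear_combination (h + ht) / 2
      rintro (⟨hb, hc⟩ | ⟨rfl, rfl, -, -⟩)
      · obtain rfl : b = 0 := (mul_eq_zero.mp hb).resolve_left hne
        obtain rfl : c = 0 := (mul_eq_zero.mp hc).resolve_left hne
        exact Or.inl (mem_HdiagP_of_entries (by simpa using hdet) hB)
      · have hbc : b * -c = 1 := by linear_combination hdet
        refine Or.inr ⟨B, rfl, b, left_ne_zero_of_mul_eq_one hbc, ?_⟩
        rw [hB, ← eq_inv_of_mul_eq_one_right hbc, neg_neg]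
    · rintro (hg | ⟨B, rfl, μ, -, hB⟩)
      · exact comm_of_mem_HdiagP hl hA hg
      · rw [prSL_comm_diag_iff hl hA hB]
        right
        simp [ht]
end

section
/- Let Γ be a discrete subgroup of PSL(2,ℂ) and γ ∈ Γ a nontrivial element that is not parabolic, i.e. a lift A ∈ SL(2,ℂ) of γ satisfies tr A ∉ {2,−2}. Suppose the centralizer C_Γ(γ) = {g ∈ Γ : gγ = γg} is infinite. Then the conjugacy orbit {g⁻¹γg : g ∈ Γ} is a discrete subset of PSL(2,ℂ) (its subspace topology is discrete), and it is contained in the single set X_τ where τ = [tr A]. -/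
/-!
The orbit of `γ` under conjugation by `Γ` lies in `Γ`, and a subset of a discrete set is discrete.
Conjugating a lift `A` of `γ` by a lift of `g` gives a lift of `g⁻¹γg` with the same trace, so the
orbit lies in `X_τ` with `τ = [tr A]`.
-/

open Matrix

/-- for a discrete subgroup `Γ ≤ PSL(2,ℂ)` and a nontrivial
non-parabolic `γ ∈ Γ` (a lift `A` has `tr A ∉ {2,−2}`) with infinite centralizer
`C_Γ(γ)`, the conjugacy orbit `{g⁻¹γg : g ∈ Γ}` is a discrete subset of `PSL(2,ℂ)`
contained in the single component `X_τ`, `τ = [tr A]`. -/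
theorem orbit_discrete_of_not_parabolic
    (Γ : Subgroup PSL2C) (hΓ : DiscreteTopology Γ) (γ : Γ) (hγ : γ ≠ 1)
    (A : SL2C) (hA : prSL A = (γ : PSL2C))
    (h2 : Matrix.trace (A : Matrix (Fin 2) (Fin 2) ℂ) ≠ 2)
    (h2' : Matrix.trace (A : Matrix (Fin 2) (Fin 2) ℂ) ≠ -2)
    (hC : ((Subgroup.centralizer {γ} : Subgroup Γ) : Set Γ).Infinite) :
    DiscreteTopology ↥{x : PSL2C | ∃ g ∈ Γ, g⁻¹ * (γ : PSL2C) * g = x} ∧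
    {x : PSL2C | ∃ g ∈ Γ, g⁻¹ * (γ : PSL2C) * g = x}
      ⊆ XtauP (Matrix.trace (A : Matrix (Fin 2) (Fin 2) ℂ)) := by
  constructor
  · have hsub : {x : PSL2C | ∃ g ∈ Γ, g⁻¹ * (γ : PSL2C) * g = x} ⊆ (Γ : Set PSL2C) := by
      rintro x ⟨g, hg, rfl⟩
      exact Γ.mul_mem (Γ.mul_mem (Γ.inv_mem hg) γ.2) hg
    exact DiscreteTopology.of_subset (s := (Γ : Set PSL2C)) hΓ hsub
  · rintro x ⟨g, -, rfl⟩
    refine ⟨fun h => hγ (Subtype.ext ?_), ?_⟩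
    · have h' : (γ : PSL2C) * g = g := by simpa [mul_assoc, inv_mul_eq_one, eq_comm] using h
      simpa using h'
    · obtain ⟨B, rfl⟩ : ∃ B, prSL B = g := QuotientGroup.mk'_surjective _ g
      refine ⟨B⁻¹ * A * B, by rw [map_mul, map_mul, map_inv, hA], Or.inl ?_⟩
      -- Cyclicity of the trace reduces the trace of the conjugate to that of `A`.
      have hconj : B * (B⁻¹ * A) = A := mul_inv_cancel_left B A
      calc Matrix.trace (B⁻¹ * A * B).1
          = Matrix.trace ((B⁻¹ * A).1 * B.1) := rfl
        _ = Matrix.trace (B.1 * (B⁻¹ * A).1) := Matrix.trace_mul_comm _ _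
        _ = Matrix.trace (B * (B⁻¹ * A)).1 := rfl
        _ = Matrix.trace A.1 := by rw [hconj]
end
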